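/- Let D be a Krull domain with quotient field K, let G be a torsion-free abelian group with a fixed total order compatible with addition, let P be a height-one prime ideal of D and c ∈ K with v_P(c) = 1, and let α ∈ G with α > 0. Then the element c + X^α is irreducible in the group algebra K[G]. -/

import Mathlib

open scoped nonZeroDivisors

noncomputable section

/-- A height-one prime ideal (prime divisor) of a commutative ring:
a nonzero prime ideal that is minimal among nonzero prime ideals. -/
def IsHeightOnePrime {R : Type*} [CommRing R] (P : Ideal R) : Prop :=
  P.IsPrime ∧ P ≠ ⊥ ∧ ∀ Q : Ideal R, Q.IsPrime → Q ≠ ⊥ → Q ≤ P → Q = P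

/-- The divisorial (v-)closure `I_v = (R : (R : I))` of a fractional ideal. -/
def divClosure {R : Type*} [CommRing R] [IsDomain R] {K : Type*} [Field K] [Algebra R K]
    [IsFractionRing R K] (I : FractionalIdeal R⁰ K) : FractionalIdeal R⁰ K :=
  1 / (1 / I)

/-- A Krull domain: a domain that is completely integrally closed and satisfies the
ascending chain condition on (integral) divisorial ideals. -/
def IsKrullDomain (R : Type*) [CommRing R] [IsDomain R] : Prop :=
  (∀ x : FractionRing R,
      (∃ c : R, c ≠ 0 ∧ ∀ n : ℕ,
          IsLocalization.IsInteger R (algebraMap R (FractionRing R) c * x ^ n)) →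
      IsLocalization.IsInteger R x) ∧
  (∀ f : ℕ → Ideal R,
      (∀ n, divClosure (f n : FractionalIdeal R⁰ (FractionRing R)) =
        (f n : FractionalIdeal R⁰ (FractionRing R))) →
      (∀ n, f n ≤ f (n + 1)) → ∃ n, ∀ m, n ≤ m → f m = f n)

/-- Every divisor class of the Krull domain `R` (i.e. every class of v-invertible divisorial
fractional ideals modulo principal ones) contains infinitely many height-one prime ideals. -/
def HasInfinitelyManyPrimeDivisorsInEachClass (R : Type*) [CommRing R] [IsDomain R] : Prop :=
  ∀ I : FractionalIdeal R⁰ (FractionRing R), I ≠ 0 → divClosure I = I →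
    divClosure (I * (1 / I)) = 1 →
    {P : Ideal R | IsHeightOnePrime P ∧ ∃ c : FractionRing R, c ≠ 0 ∧
      (P : FractionalIdeal R⁰ (FractionRing R)) =
        divClosure (FractionalIdeal.spanSingleton R⁰ c * I)}.Infinite

/-- The subset `P·D_P` of `K`: elements of the form `a / b` with `a ∈ P`, `b ∉ P`. -/
def primeLocSet (D K : Type*) [CommRing D] [Field K] [Algebra D K] (P : Ideal D) : Set K :=
  {x : K | ∃ a ∈ P, ∃ b : D, b ∉ P ∧ algebraMap D K b * x = algebraMap D K a}

/-- `v_P(x) = 1` for the normalized `P`-adic valuation at a height-one prime `P` of a Krull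
domain: `x ∈ P·D_P` but `x` is not a product of two elements of `P·D_P`. -/
def valOneAt (D : Type*) {K : Type*} [CommRing D] [Field K] [Algebra D K] (P : Ideal D)
    (x : K) : Prop :=
  x ∈ primeLocSet D K P ∧ ¬ ∃ y ∈ primeLocSet D K P, ∃ z ∈ primeLocSet D K P, x = y * z

/-!
Let `A` be integrally closed in `K`, let `π` be irreducible in `A`, and suppose
`π + X^α = g * h` with neither factor a unit of `K[G]`, that is, neither a monomial. If `g₀, h₀`
and `g₁, h₁` are the lowest and the highest coefficients of `g` and `h`, then `g₀ * h₀ = π` and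
`g₁ * h₁ = 1`, so `π = (g₀ * h₁) * (g₁ * h₀)`. By Gauss's lemma every valuation `v ≤ 1` on `A` is
at most `1` on both factors, so they lie in `A`. By Gauss's lemma again, if moreover `v π < 1`,
then `g₁` and `h₁` strictly dominate `g₀` and `h₀`, so neither factor is a unit of `A`, a
contradiction. For the theorem, `A = D_P`: there `v_P(c) = 1` says that `c` is irreducible in
`D_P`, and a Krull domain is integrally closed.
-/

open scoped AddMonoidAlgebra

section ExtremeExponents

variable {R G : Type*} [Semiring R] [AddCommMonoid G] [LinearOrder G] [IsOrderedCancelAddMonoid G]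
  {g h : R[G]} {m n : G}

theorem coeff_mul_add_of_isGreatest (hm : IsGreatest (g.coeff.support : Set G) m)
    (hn : IsGreatest (h.coeff.support : Set G) n) :
    (g * h).coeff (m + n) = g.coeff m * h.coeff n :=
  AddMonoidAlgebra.coeff_mul_add_of_uniqueAdd fun _ _ hp hq hpq =>
    (add_eq_add_iff_eq_and_eq (hm.2 hp) (hn.2 hq)).1 hpq

theorem isGreatest_support_mul [NoZeroDivisors R]
    (hm : IsGreatest (g.coeff.support : Set G) m) (hn : IsGreatest (h.coeff.support : Set G) n) :
    IsGreatest ((g * h).coeff.support : Set G) (m + n) := by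
  classical
  refine ⟨?_, fun k hk => ?_⟩
  · rw [Finset.mem_coe, Finsupp.mem_support_iff, coeff_mul_add_of_isGreatest hm hn]
    exact mul_ne_zero (Finsupp.mem_support_iff.1 hm.1) (Finsupp.mem_support_iff.1 hn.1)
  · obtain ⟨p, hp, q, hq, rfl⟩ :=
      Finset.mem_add.1 (AddMonoidAlgebra.support_coeff_mul_subset g h hk)
    exact add_le_add (hm.2 hp) (hn.2 hq)

theorem coeff_mul_add_of_isLeast (hm : IsLeast (g.coeff.support : Set G) m)
    (hn : IsLeast (h.coeff.support : Set G) n) :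
    (g * h).coeff (m + n) = g.coeff m * h.coeff n :=
  coeff_mul_add_of_isGreatest (G := Gᵒᵈ) hm hn

theorem isLeast_support_mul [NoZeroDivisors R]
    (hm : IsLeast (g.coeff.support : Set G) m) (hn : IsLeast (h.coeff.support : Set G) n) :
    IsLeast ((g * h).coeff.support : Set G) (m + n) :=
  isGreatest_support_mul (G := Gᵒᵈ) hm hn

end ExtremeExponents

theorem exists_isLeast_isGreatest_support {R G : Type*} [Semiring R] [LinearOrder G] {g : R[G]}
    (hg : g ≠ 0) :
    ∃ i m, IsLeast (g.coeff.support : Set G) i ∧ IsGreatest (g.coeff.support : Set G) m := by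
  have hne : g.coeff.support.Nonempty := by
    rwa [Finsupp.support_nonempty_iff, Ne, AddMonoidAlgebra.coeff_eq_zero]
  exact ⟨_, _, Finset.isLeast_min' _ hne, Finset.isGreatest_max' _ hne⟩

theorem isUnit_iff_of_isLeast_of_isGreatest {F G : Type*} [Field F] [AddCommGroup G]
    [LinearOrder G] [IsOrderedAddMonoid G] {g : F[G]} {i m : G}
    (hi : IsLeast (g.coeff.support : Set G) i) (hm : IsGreatest (g.coeff.support : Set G) m) :
    IsUnit g ↔ i = m := by
  constructor
  · intro hg
    obtain ⟨h, hgh⟩ := isUnit_iff_exists_inv.1 hg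
    have hh : h ≠ 0 := right_ne_zero_of_mul (hgh ▸ one_ne_zero)
    obtain ⟨j, n, hj, hn⟩ := exists_isLeast_isGreatest_support hh
    have hlow := (isLeast_support_mul hi hj).1
    have hhigh := (isGreatest_support_mul hm hn).1
    simp only [hgh, AddMonoidAlgebra.support_coeff_one, Finset.coe_zero, Set.mem_zero]
      at hlow hhigh
    exact ((add_eq_add_iff_eq_and_eq (hi.2 hm.1) (hj.2 hn.1)).1 (hlow.trans hhigh.symm)).1
  · rintro rfl
    have hsupp : g.coeff.support ⊆ {i} := fun p hp =>
      Finset.mem_singleton.2 (le_antisymm (hm.2 hp) (hi.2 hp))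
    have hg : g = AddMonoidAlgebra.single i (g.coeff i) :=
      AddMonoidAlgebra.coeff_injective (Finsupp.support_subset_singleton.1 hsupp)
    have hgi : g.coeff i ≠ 0 := Finsupp.mem_support_iff.1 hi.1
    rw [hg]
    refine IsUnit.of_mul_eq_one (AddMonoidAlgebra.single (-i) (g.coeff i)⁻¹) ?_
    rw [AddMonoidAlgebra.single_mul_single, add_neg_cancel, mul_inv_cancel₀ hgi,
      AddMonoidAlgebra.one_def]

/-- The exponent `i` is the least one at which the Gauss norm `max_p v (g_p)` of `g` is attained,
and this norm is nonzero. It plays the role that the least exponent with a unit coefficient plays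
in the classical proof of Gauss's lemma. -/
structure IsGaussExponent {R G Γ : Type*} [Ring R] [LinearOrder G]
    [LinearOrderedCommGroupWithZero Γ] (v : Valuation R Γ) (g : R[G]) (i : G) : Prop where
  map_coeff_pos : 0 < v (g.coeff i)
  map_coeff_le (p : G) : v (g.coeff p) ≤ v (g.coeff i)
  map_coeff_lt {p : G} (hp : p < i) : v (g.coeff p) < v (g.coeff i)

section GaussExponents

variable {R G Γ : Type*} [Ring R] [LinearOrderedCommGroupWithZero Γ] {v : Valuation R Γ}

theorem mem_support_of_map_coeff_pos {g : R[G]} {p : G} (hp : 0 < v (g.coeff p)) :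
    p ∈ g.coeff.support :=
  Finsupp.mem_support_iff.2 fun h0 => by simp [h0] at hp

theorem exists_isGaussExponent [LinearOrder G] {g : R[G]} {p : G} (hp : 0 < v (g.coeff p)) :
    ∃ i, IsGaussExponent v g i := by
  obtain ⟨m, -, hmax⟩ :=
    g.coeff.support.exists_max_image (fun q => v (g.coeff q)) ⟨p, mem_support_of_map_coeff_pos hp⟩
  have le_max (q : G) : v (g.coeff q) ≤ v (g.coeff m) := by
    by_cases hq : q ∈ g.coeff.support
    · exact hmax q hq
    · simp [Finsupp.notMem_support_iff.1 hq]
  have max_pos : 0 < v (g.coeff m) := hp.trans_le (le_max p)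
  let maximizers : Finset G := {q ∈ g.coeff.support | v (g.coeff q) = v (g.coeff m)}
  obtain ⟨i, hi, hmin⟩ :=
    maximizers.exists_min_image id
      ⟨m, Finset.mem_filter.2 ⟨mem_support_of_map_coeff_pos max_pos, rfl⟩⟩
  have hi' : v (g.coeff i) = v (g.coeff m) := (Finset.mem_filter.1 hi).2
  refine ⟨i, hi' ▸ max_pos, fun q => hi' ▸ le_max q, fun {q} hq => hi' ▸ ?_⟩
  refine (le_max q).lt_of_ne fun heq => hq.not_ge (hmin q ?_)
  exact Finset.mem_filter.2 ⟨mem_support_of_map_coeff_pos (heq ▸ max_pos), heq⟩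

variable [AddCommMonoid G] [LinearOrder G] [IsOrderedCancelAddMonoid G] {g h : R[G]}

theorem IsGaussExponent.map_coeff_mul {i j : G} (hi : IsGaussExponent v g i)
    (hj : IsGaussExponent v h j) :
    v ((g * h).coeff (i + j)) = v (g.coeff i) * v (h.coeff j) := by
  classical
  have other_terms_lt (p q : G) (hne : (p, q) ≠ (i, j)) :
      v (if p + q = i + j then g.coeff p * h.coeff q else 0) < v (g.coeff i * h.coeff j) := by
    split_ifs with hpq
    · rw [map_mul, map_mul]
      rcases lt_or_ge p i with hp | hp
      · exact mul_lt_mul_of_lt_of_le_of_nonneg_of_pos (hi.map_coeff_lt hp) (hj.map_coeff_le q)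
          zero_le hj.map_coeff_pos
      · have hq : q < j := lt_of_not_ge fun hq => hne <| Prod.ext_iff.2 <| by
          have := (add_eq_add_iff_eq_and_eq hp hq).1 hpq.symm
          exact ⟨this.1.symm, this.2.symm⟩
        exact mul_lt_mul_of_le_of_lt_of_nonneg_of_pos (hi.map_coeff_le p) (hj.map_coeff_lt hq)
          zero_le hi.map_coeff_pos
    · rw [map_zero, map_mul]
      exact mul_pos hi.map_coeff_pos hj.map_coeff_pos
  have mem : (i, j) ∈ g.coeff.support ×ˢ h.coeff.support :=
    Finset.mem_product.2 ⟨mem_support_of_map_coeff_pos hi.map_coeff_pos,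
      mem_support_of_map_coeff_pos hj.map_coeff_pos⟩
  rw [AddMonoidAlgebra.coeff_mul, Finsupp.sum]
  simp only [Finsupp.sum]
  rw [← Finset.sum_product', Valuation.map_sum_eq_of_lt v mem]
  · rw [if_pos rfl, map_mul]
  · intro ⟨p, q⟩ hpq
    rw [if_pos rfl]
    exact other_terms_lt p q (by simpa using (Finset.mem_sdiff.1 hpq).2)

theorem map_coeff_mul_map_coeff_le {r : Γ} (hr : ∀ k, v ((g * h).coeff k) ≤ r) (p q : G) :
    v (g.coeff p) * v (h.coeff q) ≤ r := by
  by_contra! hlt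
  have hpos : 0 < v (g.coeff p) * v (h.coeff q) := zero_le.trans_lt hlt
  obtain ⟨i, hi⟩ := exists_isGaussExponent (pos_of_mul_pos_left hpos zero_le)
  obtain ⟨j, hj⟩ := exists_isGaussExponent (pos_of_mul_pos_right hpos zero_le)
  refine hlt.not_ge ?_
  calc v (g.coeff p) * v (h.coeff q) ≤ v (g.coeff i) * v (h.coeff j) :=
        mul_le_mul' (hi.map_coeff_le p) (hj.map_coeff_le q)
    _ = v ((g * h).coeff (i + j)) := (hi.map_coeff_mul hj).symm
    _ ≤ r := hr _

theorem IsGaussExponent.of_mul_of_isGreatest {m n : G} (hmn : IsGaussExponent v (g * h) (m + n))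
    (hm : IsGreatest (g.coeff.support : Set G) m) (hn : IsGreatest (h.coeff.support : Set G) n) :
    IsGaussExponent v g m ∧ IsGaussExponent v h n := by
  have top : v ((g * h).coeff (m + n)) = v (g.coeff m) * v (h.coeff n) := by
    rw [coeff_mul_add_of_isGreatest hm hn, map_mul]
  have hpos : 0 < v (g.coeff m) * v (h.coeff n) := top ▸ hmn.map_coeff_pos
  obtain ⟨i, hi⟩ := exists_isGaussExponent (pos_of_mul_pos_left hpos zero_le)
  obtain ⟨j, hj⟩ := exists_isGaussExponent (pos_of_mul_pos_right hpos zero_le)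
  have him : i ≤ m := hm.2 (mem_support_of_map_coeff_pos hi.map_coeff_pos)
  have hjn : j ≤ n := hn.2 (mem_support_of_map_coeff_pos hj.map_coeff_pos)
  have top_le : v ((g * h).coeff (m + n)) ≤ v ((g * h).coeff (i + j)) := by
    rw [top, hi.map_coeff_mul hj]
    exact mul_le_mul' (hi.map_coeff_le m) (hj.map_coeff_le n)
  have hsum : i + j = m + n :=
    (add_le_add him hjn).eq_of_not_lt fun hlt => (hmn.map_coeff_lt hlt).not_ge top_le
  obtain ⟨rfl, rfl⟩ := (add_eq_add_iff_eq_and_eq him hjn).1 hsum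
  exact ⟨hi, hj⟩

end GaussExponents

section Binomial

variable {R G : Type*} {a b : R} {i m : G}

theorem coeff_single_add_single_left [Semiring R] (him : i ≠ m) :
    (AddMonoidAlgebra.single i a + AddMonoidAlgebra.single m b).coeff i = a := by
  simp [him]

theorem coeff_single_add_single_right [Semiring R] (him : i ≠ m) :
    (AddMonoidAlgebra.single i a + AddMonoidAlgebra.single m b).coeff m = b := by
  simp [him.symm]

theorem coeff_single_add_single_of_ne [Semiring R] {k : G} (hki : k ≠ i) (hkm : k ≠ m) :
    (AddMonoidAlgebra.single i a + AddMonoidAlgebra.single m b).coeff k = 0 := by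
  simp [hki, hkm]

theorem coeff_single_add_single_mem [Semiring R] {S : Type*} [SetLike S R]
    [AddSubmonoidClass S R] {A : S} (ha : a ∈ A) (hb : b ∈ A) (k : G) :
    (AddMonoidAlgebra.single i a + AddMonoidAlgebra.single m b).coeff k ∈ A := by
  classical
  rw [AddMonoidAlgebra.coeff_add, Finsupp.add_apply, AddMonoidAlgebra.coeff_single,
    AddMonoidAlgebra.coeff_single, Finsupp.single_apply, Finsupp.single_apply]
  exact add_mem (ite_mem.2 ⟨fun _ => ha, fun _ => zero_mem A⟩)
    (ite_mem.2 ⟨fun _ => hb, fun _ => zero_mem A⟩)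

theorem isLeast_support_single_add_single [Semiring R] [LinearOrder G] (ha : a ≠ 0) (hb : b ≠ 0)
    (him : i < m) :
    IsLeast ((AddMonoidAlgebra.single i a + AddMonoidAlgebra.single m b).coeff.support : Set G)
      i := by
  rw [AddMonoidAlgebra.coeff_add, AddMonoidAlgebra.coeff_single, AddMonoidAlgebra.coeff_single,
    Finsupp.support_single_add_single him.ne ha hb]
  simp [IsLeast, lowerBounds, him.le]

theorem isGreatest_support_single_add_single [Semiring R] [LinearOrder G] (ha : a ≠ 0)
    (hb : b ≠ 0) (him : i < m) :
    IsGreatest ((AddMonoidAlgebra.single i a + AddMonoidAlgebra.single m b).coeff.support : Set G)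
      m := by
  rw [add_comm]
  exact isLeast_support_single_add_single (G := Gᵒᵈ) hb ha him

theorem isGaussExponent_single_add_single [Ring R] [LinearOrder G] {Γ : Type*}
    [LinearOrderedCommGroupWithZero Γ] {v : Valuation R Γ} (hab : v a < v b) (him : i < m) :
    IsGaussExponent v (AddMonoidAlgebra.single i a + AddMonoidAlgebra.single m b) m := by
  have hb : 0 < v b := zero_le.trans_lt hab
  have coeff_m := coeff_single_add_single_right (a := a) (b := b) him.ne
  have map_lt {p : G} (hp : p ≠ m) :
      v ((AddMonoidAlgebra.single i a + AddMonoidAlgebra.single m b).coeff p) < v b := by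
    obtain rfl | hpi := eq_or_ne p i
    · rwa [coeff_single_add_single_left him.ne]
    · rwa [coeff_single_add_single_of_ne hpi hp, map_zero]
  refine ⟨?_, fun p => ?_, fun hp => ?_⟩ <;> rw [coeff_m]
  · exact hb
  · obtain rfl | hp := eq_or_ne p m
    · rw [coeff_m]
    · exact (map_lt hp).le
  · exact map_lt hp.ne

end Binomial

section IntegrallyClosed

variable {K : Type*} [Field K] {A : Subring K}

theorem mem_of_forall_valuationSubring [IsIntegrallyClosedIn A K] {x : K}
    (hx : ∀ V : ValuationSubring K, A ≤ V.toSubring → V.valuation x ≤ 1) : x ∈ A := by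
  by_contra hxA
  obtain ⟨V, hAV, hxV⟩ := Subring.exists_le_valuationSubring_of_isIntegrallyClosedIn hxA
  exact hxV ((V.valuation_le_one_iff x).1 (hx V hAV))

theorem exists_valuationSubring_lt_one_of_not_isUnit {a : A} (ha : ¬IsUnit a) :
    ∃ V : ValuationSubring K, A ≤ V.toSubring ∧ V.valuation (a : K) < 1 := by
  obtain ⟨V, hAV, hV⟩ := (Ideal.span {a}).image_subset_nonunits_valuationSubring
    (mt Ideal.span_singleton_eq_top.1 ha)
  exact ⟨V, hAV, V.mem_nonunits_iff.1 (hV ⟨a, Ideal.mem_span_singleton_self a, rfl⟩)⟩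

theorem not_isUnit_of_valuation_lt_one {V : ValuationSubring K} (hAV : A ≤ V.toSubring) {a : A}
    (ha : V.valuation (a : K) < 1) : ¬IsUnit a := by
  intro hu
  obtain ⟨b, hab⟩ := isUnit_iff_exists_inv.1 hu
  have hval : V.valuation (a : K) * V.valuation (b : K) = 1 := by
    rw [← map_mul, ← Subring.coe_mul, hab, Subring.coe_one, map_one]
  have hb : V.valuation (b : K) ≤ 1 := (V.valuation_le_one_iff _).2 (hAV b.2)
  exact (mul_lt_one_of_lt_of_le ha hb).ne hval

end IntegrallyClosed


section Eisenstein

variable {K G : Type*} [Field K] [AddCommGroup G] [LinearOrder G] [IsOrderedAddMonoid G]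
  {A : Subring K}

theorem coeff_mul_coeff_mem [IsIntegrallyClosedIn A K] {g h : K[G]}
    (hgh : ∀ k, (g * h).coeff k ∈ A) (p q : G) : g.coeff p * h.coeff q ∈ A :=
  mem_of_forall_valuationSubring fun V hAV => by
    rw [map_mul]
    exact map_coeff_mul_map_coeff_le (fun k => (V.valuation_le_one_iff _).2 (hAV (hgh k))) p q

theorem eq_or_eq_of_mul_eq_single_add_single [IsIntegrallyClosedIn A K] {π : A}
    (hπ : Irreducible π) {α : G} (hα : 0 < α) {g h : K[G]}
    (hgh : g * h = AddMonoidAlgebra.single 0 (π : K) + AddMonoidAlgebra.single α 1) {i j m n : G}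
    (hi : IsLeast (g.coeff.support : Set G) i) (hj : IsLeast (h.coeff.support : Set G) j)
    (hm : IsGreatest (g.coeff.support : Set G) m) (hn : IsGreatest (h.coeff.support : Set G) n) :
    i = m ∨ j = n := by
  by_contra! hne
  have him : i < m := (hi.2 hm.1).lt_of_ne hne.1
  have hjn : j < n := (hj.2 hn.1).lt_of_ne hne.2
  have hπ0 : (π : K) ≠ 0 := Subtype.coe_ne_coe.2 hπ.ne_zero
  have hij : i + j = 0 := (isLeast_support_mul hi hj).unique <|
    hgh ▸ isLeast_support_single_add_single hπ0 one_ne_zero hα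
  have hmn : m + n = α := (isGreatest_support_mul hm hn).unique <|
    hgh ▸ isGreatest_support_single_add_single hπ0 one_ne_zero hα
  have lowest : g.coeff i * h.coeff j = π := by
    rw [← coeff_mul_add_of_isLeast hi hj, hij, hgh, coeff_single_add_single_left hα.ne]
  have highest : g.coeff m * h.coeff n = 1 := by
    rw [← coeff_mul_add_of_isGreatest hm hn, hmn, hgh, coeff_single_add_single_right hα.ne]
  have mem : ∀ p q, g.coeff p * h.coeff q ∈ A :=
    coeff_mul_coeff_mem (hgh ▸ coeff_single_add_single_mem π.2 A.one_mem)
  have factorization : π = ⟨_, mem i n⟩ * ⟨_, mem m j⟩ := Subtype.ext <| by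
    calc (π : K) = (g.coeff i * h.coeff j) * (g.coeff m * h.coeff n) := by
          rw [lowest, highest, mul_one]
      _ = (g.coeff i * h.coeff n) * (g.coeff m * h.coeff j) := by ring
  obtain ⟨V, hAV, hVπ⟩ := exists_valuationSubring_lt_one_of_not_isUnit hπ.not_isUnit
  have hgauss : IsGaussExponent V.valuation (g * h) (m + n) := by
    rw [hgh, hmn]
    exact isGaussExponent_single_add_single (by rwa [map_one]) hα
  obtain ⟨gauss_m, gauss_n⟩ := hgauss.of_mul_of_isGreatest hm hn
  have hVhighest : V.valuation (g.coeff m) * V.valuation (h.coeff n) = 1 := by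
    rw [← map_mul, highest, map_one]
  refine (hπ.isUnit_or_isUnit factorization).elim (not_isUnit_of_valuation_lt_one hAV ?_)
    (not_isUnit_of_valuation_lt_one hAV ?_) <;> rw [map_mul, ← hVhighest]
  · exact mul_lt_mul_of_pos_right (gauss_m.map_coeff_lt him) gauss_n.map_coeff_pos
  · exact mul_lt_mul_of_pos_left (gauss_n.map_coeff_lt hjn) gauss_m.map_coeff_pos

theorem irreducible_single_zero_add_single [IsIntegrallyClosedIn A K] {π : A}
    (hπ : Irreducible π) {α : G} (hα : 0 < α) :
    Irreducible (AddMonoidAlgebra.single (0 : G) (π : K) + AddMonoidAlgebra.single α (1 : K)) := by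
  have hπ0 : (π : K) ≠ 0 := Subtype.coe_ne_coe.2 hπ.ne_zero
  have hlow := isLeast_support_single_add_single hπ0 (one_ne_zero (α := K)) hα
  have hhigh := isGreatest_support_single_add_single hπ0 (one_ne_zero (α := K)) hα
  refine ⟨fun hu => hα.ne ((isUnit_iff_of_isLeast_of_isGreatest hlow hhigh).1 hu),
    fun g h hgh => ?_⟩
  have hne : g * h ≠ 0 := hgh ▸ fun h0 => by simpa [h0] using hlow.1
  obtain ⟨i, m, hi, hm⟩ := exists_isLeast_isGreatest_support (left_ne_zero_of_mul hne)
  obtain ⟨j, n, hj, hn⟩ := exists_isLeast_isGreatest_support (right_ne_zero_of_mul hne)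
  exact (eq_or_eq_of_mul_eq_single_add_single hπ hα hgh.symm hi hj hm hn).imp
    (isUnit_iff_of_isLeast_of_isGreatest hi hm).2 (isUnit_iff_of_isLeast_of_isGreatest hj hn).2

end Eisenstein

section LocalizationAtPrime

variable {D K : Type*} [CommRing D] [Field K] [Algebra D K] {P : Ideal D} [P.IsPrime]
  (A : Type*) [CommRing A] [Algebra D A] [IsLocalization.AtPrime A P] [Algebra A K]
  [IsScalarTower D A K]

theorem primeLocSet_eq_image_nonunits : primeLocSet D K P = algebraMap A K '' nonunits A := by
  have mul_mk' (a : D) (b : P.primeCompl) :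
      algebraMap D K b * algebraMap A K (IsLocalization.mk' A a b) = algebraMap D K a := by
    rw [IsScalarTower.algebraMap_apply D A K, ← map_mul, IsLocalization.mk'_spec',
      ← IsScalarTower.algebraMap_apply]
  have mk'_mem_nonunits (a : D) (b : P.primeCompl) :
      IsLocalization.mk' A a b ∈ nonunits A ↔ a ∈ P := by
    rw [mem_nonunits_iff, IsLocalization.AtPrime.isUnit_mk'_iff A P, Ideal.mem_primeCompl_iff,
      not_not]
  ext x
  constructor
  · rintro ⟨a, ha, b, hb, hx⟩
    have hbK : IsUnit (algebraMap D K b) := by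
      rw [IsScalarTower.algebraMap_apply D A K]
      exact (IsLocalization.map_units A (⟨b, hb⟩ : P.primeCompl)).map (algebraMap A K)
    exact ⟨IsLocalization.mk' A a ⟨b, hb⟩, (mk'_mem_nonunits a ⟨b, hb⟩).2 ha,
      hbK.mul_left_cancel ((mul_mk' a ⟨b, hb⟩).trans hx.symm)⟩
  · rintro ⟨y, hy, rfl⟩
    obtain ⟨a, b, rfl⟩ := IsLocalization.exists_mk'_eq P.primeCompl y
    exact ⟨a, (mk'_mem_nonunits a b).1 hy, b, b.2, mul_mk' a b⟩

theorem valOneAt_iff_exists_irreducible [FaithfulSMul A K] {c : K} :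
    valOneAt D P c ↔ ∃ π : A, Irreducible π ∧ algebraMap A K π = c := by
  have product_iff (π : A) : (∃ y ∈ primeLocSet D K P, ∃ z ∈ primeLocSet D K P,
      algebraMap A K π = y * z) ↔ ∃ y ∈ nonunits A, ∃ z ∈ nonunits A, π = y * z := by
    simp only [primeLocSet_eq_image_nonunits A, Set.exists_mem_image, ← map_mul,
      (FaithfulSMul.algebraMap_injective A K).eq_iff]
  constructor
  · rintro ⟨hc, hprod⟩
    rw [primeLocSet_eq_image_nonunits A] at hc
    obtain ⟨π, hπ, rfl⟩ := hc
    rw [product_iff] at hprod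
    refine ⟨π, ⟨hπ, fun y z hyz => ?_⟩, rfl⟩
    by_contra! hnonunits
    exact hprod ⟨y, hnonunits.1, z, hnonunits.2, hyz⟩
  · rintro ⟨π, hπ, rfl⟩
    refine ⟨primeLocSet_eq_image_nonunits (P := P) (K := K) A ▸ ⟨π, hπ.not_isUnit, rfl⟩, ?_⟩
    rw [product_iff]
    rintro ⟨y, hy, z, hz, hyz⟩
    exact (hπ.isUnit_or_isUnit hyz).elim hy hz

end LocalizationAtPrime

theorem IsKrullDomain.isIntegrallyClosed {D : Type*} [CommRing D] [IsDomain D]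
    (hD : IsKrullDomain D) : IsIntegrallyClosed D := by
  refine (isIntegrallyClosed_iff (FractionRing D)).2 fun {x} hx => ?_
  obtain ⟨r, hr, hpow⟩ := hx.isAlmostIntegral
  refine hD.1 x ⟨r, nonZeroDivisors.ne_zero hr, fun n => ?_⟩
  rw [← Algebra.smul_def]
  exact hpow n

theorem eisenstein_irreducible_general {D K : Type*} [CommRing D] [IsDomain D]
    [IsIntegrallyClosed D] [Field K] [Algebra D K] [IsFractionRing D K] {G : Type*}
    [AddCommGroup G] [LinearOrder G] [IsOrderedAddMonoid G] (P : Ideal D) [P.IsPrime] {c : K}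
    (hc : valOneAt D P c) {α : G} (hα : 0 < α) :
    Irreducible (AddMonoidAlgebra.single (0 : G) c + AddMonoidAlgebra.single α (1 : K)) := by
  let A := Localization.subalgebra.ofField K P.primeCompl P.primeCompl_le_nonZeroDivisors
  have : IsIntegrallyClosed A := isIntegrallyClosed_of_isLocalization A P.primeCompl
    P.primeCompl_le_nonZeroDivisors
  have : IsIntegrallyClosedIn A.toSubring K :=
    (isIntegrallyClosed_iff_isIntegrallyClosedIn (R := A) K).1 this
  obtain ⟨π, hπ, rfl⟩ := (valOneAt_iff_exists_irreducible A).1 hc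
  exact irreducible_single_zero_add_single (A := A.toSubring) hπ hα

/-- **Lemma (generalized Eisenstein criterion, Chang's Lemma 5, special case).**
Let `D` be a Krull domain with quotient field `K`, `G` a torsion-free abelian group with a
total order compatible with addition, `P` a height-one prime of `D`, `c ∈ K` with
`v_P(c) = 1`, and `α ∈ G` with `α > 0`. Then `c + X^α` is irreducible in `K[G]`. -/
theorem eisenstein_irreducible {D K : Type*} [CommRing D] [IsDomain D] [Field K]
    [Algebra D K] [IsFractionRing D K] {G : Type*} [AddCommGroup G] [LinearOrder G]
    [CovariantClass G G (· + ·) (· < ·)]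
    (htf : IsAddTorsionFree G)
    (hD : IsKrullDomain D)
    (P : Ideal D) (hP : IsHeightOnePrime P)
    (c : K) (hc : valOneAt D P c)
    (α : G) (hα : 0 < α) :
    Irreducible (AddMonoidAlgebra.single (0 : G) c + AddMonoidAlgebra.single α (1 : K)) := by
  have := hD.isIntegrallyClosed
  have := hP.1
  have : AddLeftStrictMono G := ⟨CovariantClass.elim⟩
  have := addLeftMono_of_addLeftStrictMono G
  have : IsOrderedAddMonoid G := { add_le_add_left := fun _ _ h k => by gcongr }
  exact eisenstein_irreducible_general P hc hα

end
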